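/- Let G be a group, A ⊆ G finite nonempty, A' ⊆ A with |A'| ≥ c|A| and |A'A| ≤ K|A|, where c ∈ (0,1] and K ≥ 1. Define L := {t ∈ G : |A' ∩ tA'| ≥ |A'|⁴/(2|A'A||A|²)}. Then |L| ≥ |A'|³/(2|A'A||A|) ≥ c³|A|/(2K). -/

import Mathlib

open Finset Pointwise

lemma energy_le_aux {G : Type*} [Group G] [DecidableEq G] (B : Finset G) :
    mulEnergy B B ≤ ∑ p ∈ B ×ˢ B, (B ∩ (p.2⁻¹ * p.1) • B).card := by
  unfold mulEnergy
  rw [card_eq_sum_card_fiberwise (f := Prod.fst) (t := B ×ˢ B)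
    (by intro x hx; simp at hx; simp [hx])]
  refine sum_le_sum fun p _ => ?_
  refine card_le_card_of_injOn (fun x => x.2.2) ?_ ?_
  · rintro ⟨⟨a, b⟩, d, e⟩ hx
    simp only [coe_filter, mem_filter, mem_product, Set.mem_ofPred_eq] at hx
    obtain ⟨⟨⟨_, hd, he⟩, h⟩, rfl⟩ := hx
    simp only [coe_inter, Set.mem_inter_iff, mem_coe]
    refine ⟨he, mem_smul_finset.2 ⟨d, hd, ?_⟩⟩
    simp only [smul_eq_mul]
    rw [mul_assoc, h, inv_mul_cancel_left]
  · rintro ⟨⟨a, b⟩, d, e⟩ hx ⟨⟨a', b'⟩, d', e'⟩ hy hxy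
    simp only [coe_filter, mem_filter, mem_product, Set.mem_ofPred_eq] at hx hy hxy
    obtain ⟨⟨_, h⟩, rfl⟩ := hx
    obtain ⟨⟨_, h'⟩, h2⟩ := hy
    simp only [Prod.mk.injEq] at h2
    obtain ⟨rfl, rfl⟩ := h2
    subst hxy
    have : d = d' := mul_left_cancel (h.trans h'.symm)
    rw [this]

lemma pairs_aux {G : Type*} [Group G] [DecidableEq G] (B L : Finset G) :
    ((B ×ˢ B).filter (fun p => p.2⁻¹ * p.1 ∈ L)).card ≤ B.card * L.card := by
  rw [← card_product]
  refine card_le_card_of_injOn (fun p => (p.2, p.2⁻¹ * p.1)) ?_ ?_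
  · rintro ⟨a, b⟩ h
    simp at h ⊢
    exact ⟨h.1.2, h.2⟩
  · rintro ⟨a, b⟩ _ ⟨a', b'⟩ _ h
    simp only [Prod.mk.injEq] at h
    obtain ⟨rfl, h⟩ := h
    rw [mul_left_cancel h]

theorem stmt10 {G : Type*} [Group G] [DecidableEq G] (A A' : Finset G)
    (hA : A.Nonempty) (hsub : A' ⊆ A) (c K : ℝ) (hc0 : 0 < c) (hc1 : c ≤ 1)
    (hK : 1 ≤ K) (hA'c : c * A.card ≤ (A'.card : ℝ))
    (hA'A : ((A' * A).card : ℝ) ≤ K * A.card) :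
    ((A'.card : ℝ)) ^ 3 / (2 * ((A' * A).card : ℝ) * A.card) ≤
      (Nat.card {t : G |
        ((A'.card : ℝ)) ^ 4 / (2 * ((A' * A).card : ℝ) * (A.card : ℝ) ^ 2) ≤
          ((A' ∩ t • A').card : ℝ)} : ℝ) ∧
    c ^ 3 * A.card / (2 * K) ≤
      ((A'.card : ℝ)) ^ 3 / (2 * ((A' * A).card : ℝ) * A.card) := by
  have hn : (0 : ℝ) < A.card := by exact_mod_cast hA.card_pos
  have hm : (0 : ℝ) < A'.card := lt_of_lt_of_le (by positivity) hA'c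
  have hA' : A'.Nonempty := card_pos.1 (by exact_mod_cast hm)
  have hP : (0 : ℝ) < (A' * A).card := by exact_mod_cast (hA'.mul hA).card_pos
  have hmn : (A'.card : ℝ) ≤ A.card := by exact_mod_cast card_le_card hsub
  have hE : (A'.card : ℝ) ^ 4 ≤ (A' * A).card *
      ∑ p ∈ A' ×ˢ A', ((A' ∩ (p.2⁻¹ * p.1) • A').card : ℝ) := by
    have h1 := le_card_mul_mul_mulEnergy A' A'
    have h2 : (A' * A').card ≤ (A' * A).card := card_le_card (mul_subset_mul_left hsub)
    have h3 := h1.trans (Nat.mul_le_mul h2 (energy_le_aux A'))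
    rw [← pow_add] at h3
    exact_mod_cast h3
  set m : ℝ := (A'.card : ℝ) with hmdef
  set n : ℝ := (A.card : ℝ)
  set P : ℝ := ((A' * A).card : ℝ)
  set τ : ℝ := m ^ 4 / (2 * P * n ^ 2) with hτ
  have hτ0 : 0 < τ := by positivity
  constructor
  · set L : Finset G := (A' / A').filter (fun t => τ ≤ ((A' ∩ t • A').card : ℝ)) with hL
    have hmem : ∀ t, t ∈ L ↔ τ ≤ ((A' ∩ t • A').card : ℝ) := by
      intro t
      rw [hL, mem_filter, and_iff_right_iff_imp]
      intro h
      have h0 : 0 < (A' ∩ t • A').card := by exact_mod_cast hτ0.trans_le h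
      obtain ⟨x, hx⟩ := card_pos.1 h0
      rw [mem_inter, mem_smul_finset] at hx
      obtain ⟨hx, y, hy, rfl⟩ := hx
      exact mem_div.2 ⟨_, hx, y, hy, by simp⟩
    have hset : {t : G | τ ≤ ((A' ∩ t • A').card : ℝ)} = (L : Set G) := by
      ext t; simp [hmem]
    rw [hset]
    have hcard : Nat.card (L : Set G) = L.card := by simp
    rw [hcard]
    set l : ℝ := (L.card : ℝ)
    have hS : ∑ p ∈ A' ×ˢ A', ((A' ∩ (p.2⁻¹ * p.1) • A').card : ℝ) ≤ m * l * m + m ^ 2 * τ := by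
      calc _ ≤ ∑ p ∈ A' ×ˢ A', ((if p.2⁻¹ * p.1 ∈ L then m else 0) + τ) := by
            refine sum_le_sum fun p _ => ?_
            split_ifs with h
            · have : ((A' ∩ (p.2⁻¹ * p.1) • A').card : ℝ) ≤ m := by
                exact Nat.cast_le.2 (card_le_card inter_subset_left)
              linarith
            · rw [hmem] at h
              linarith
        _ = (((A' ×ˢ A').filter (fun p => p.2⁻¹ * p.1 ∈ L)).card : ℝ) * m + m ^ 2 * τ := by
            rw [sum_add_distrib, ← sum_filter]
            simp [card_product, ← hmdef, sq]
        _ ≤ _ := by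
            have : (((A' ×ˢ A').filter (fun p => p.2⁻¹ * p.1 ∈ L)).card : ℝ) ≤ m * l := by
              have h0 : ((_ : ℕ) : ℝ) ≤ ((_ : ℕ) : ℝ) := Nat.cast_le.2 (pairs_aux A' L)
              rwa [Nat.cast_mul] at h0
            gcongr
    have h1 : m ^ 4 ≤ P * (m * l * m + m ^ 2 * τ) := hE.trans (by gcongr)
    have h2 : P * (m ^ 2 * τ) ≤ m ^ 4 / 2 := by
      have : P * (m ^ 2 * τ) = m ^ 4 / 2 * (m ^ 2 / n ^ 2) := by
        rw [hτ]; field_simp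
      rw [this]
      apply mul_le_of_le_one_right (by positivity)
      rw [div_le_one (by positivity)]
      gcongr
    have h3 : m ^ 2 ≤ 2 * P * l := by
      have : m ^ 2 * m ^ 2 ≤ m ^ 2 * (2 * P * l) := by nlinarith
      exact le_of_mul_le_mul_left this (by positivity)
    rw [div_le_iff₀ (by positivity)]
    calc m ^ 3 = m ^ 2 * m := by ring
      _ ≤ (2 * P * l) * n := by gcongr
      _ = _ := by ring
  · rw [div_le_div_iff₀ (by positivity) (by positivity)]
    calc c ^ 3 * n * (2 * P * n) ≤ c ^ 3 * n * (2 * (K * n) * n) := by gcongr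
      _ = (c * n) ^ 3 * (2 * K) := by ring
      _ ≤ _ := by gcongr
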